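/- Consider a Fragile CPR game with strictly increasing rate of return r. Let t_2 < t_1 < t̄ be tax rates with x^{t_2}_NE > a_{t_1}. Suppose that for every player i, k_i > q_i(x^{t_2}_NE, t_1). Then the PNE utilizations satisfy x^{t_1}_NE ≤ x^{t_2}_NE; that is, the higher tax rate yields weakly smaller utilization. -/

import Mathlib

/-!
Let `X1`, `X2` be the total investments at the tax rates `t1 > t2`, and suppose `X2 < X1`; then every
player invests weakly less at `t1` than at `t2`, contradicting `X2 < X1`. Both totals lie in `(0,1)`,
and `r` exceeds `t1` at both, so the rate of return `f` is there a concave differentiable function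
of the utilization.

A player inactive at `t2` has `f(·, t2) ≤ 0` beyond `X2`, hence `f(X1, t1) < 0`, and stays inactive.
A player investing `c > 0` at `t2` satisfies `f ≥ 0` and the first order condition `α f + c f_x = 0`
at `(X2, t2)`. After division by `(1+t)^α`, both `f` and `f_x` depend on `t` only through
`w = (r-t)/(1+t)`, and the cross product `f(X2,t) f_x(X2,t2) - f(X2,t2) f_x(X2,t)` is positive for
`t2 < t ≤ t1` (`cross_pos`, `tax_cross`): this is the condition `k > q` combined with the concavity
of `w ↦ w^α`. The equilibrium conditions at `t2` force the denominator of `q` to be positive.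

If `f(X2, t1) ≥ 0`, positivity of the cross product gives `f_x(X2,t1) < 0` and
`α f + c f_x < 0` at `(X2, t1)`; by concavity the latter persists at `(X1, t1)`, which is compatible
with the first order condition there only if the investment at `t1` is at most `c`. If
`f(X2, t1) < 0`, then `f(X2, s) = 0` for some `s` between `t2` and `t1`, the cross product gives
`f_x(X2, s) < 0`, and hence `f(X1, t1) < f(X1, s) < 0`, so the player cannot be active at `t1`
(`active_le`).
-/

open Real Set

noncomputable section

/-- Effective rate of return of a player with sensitivity `α` and loss aversion `k`,
at utilization `x` and tax rate `t`. -/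
def effRate (p r : ℝ → ℝ) (α k x t : ℝ) : ℝ :=
  if 0 ≤ r x - t then
    (r x - t) ^ α * (1 - p x) - k * (1 + t) ^ α * p x
  else
    -(k * ((t - r x) ^ α * (1 - p x) + (1 + t) ^ α * p x))

/-- Partial derivative of the effective rate of return in the utilization. -/
def effRateDx (p r : ℝ → ℝ) (α k x t : ℝ) : ℝ :=
  deriv (fun z => effRate p r α k z t) x

/-- `g_i(x,t) = α_i f_i(x,t) / (−f_{i,x}(x,t))`. -/
def gFun (p r : ℝ → ℝ) (α k x t : ℝ) : ℝ :=
  α * effRate p r α k x t / (-effRateDx p r α k x t)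

/-- Standing assumptions on the failure probability `p`. -/
structure FailureProb (p : ℝ → ℝ) : Prop where
  convexOn : ConvexOn ℝ (Ico (0:ℝ) 1) p
  strictMonoOn : StrictMonoOn p (Ico (0:ℝ) 1)
  contDiffOn : ContDiffOn ℝ 1 p (Ico (0:ℝ) 1)
  eq_one : ∀ x : ℝ, 1 ≤ x → p x = 1
  mem_unit : ∀ x : ℝ, p x ∈ Icc (0:ℝ) 1

/-- Standing assumptions on the rate of return `r`. -/
structure RateOfReturn (r : ℝ → ℝ) : Prop where
  concaveOn : ConcaveOn ℝ (Icc (0:ℝ) 1) r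
  pos : ∀ x ∈ Icc (0:ℝ) 1, 0 < r x
  strictMonoOrAnti : StrictMonoOn r (Icc (0:ℝ) 1) ∨ StrictAntiOn r (Icc (0:ℝ) 1)
  contDiffOn : ContDiffOn ℝ 1 r (Icc (0:ℝ) 1)

/-- `S_t`: the set of utilizations `x ∈ [0,1]` with `r(x) − t ≥ 0`. -/
def St (r : ℝ → ℝ) (t : ℝ) : Set ℝ := {x | x ∈ Icc (0:ℝ) 1 ∧ 0 ≤ r x - t}

/-- The maximal tax rate `t̄` of the game. -/
def tbar {ι : Type*} [Fintype ι] (p r : ℝ → ℝ) (α k : ι → ℝ) : ℝ :=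
  sSup {t : ℝ | 0 ≤ t ∧ ∃ i : ι, ∃ x ∈ Icc (0:ℝ) 1, 0 < effRate p r (α i) (k i) x t}

/-- The maximal tax rate `t̄_i` of a single player. -/
def tbarI (p r : ℝ → ℝ) (α k : ℝ) : ℝ :=
  sSup {t : ℝ | 0 ≤ t ∧ ∃ x ∈ St r t, 0 < effRate p r α k x t}

/-- `a_t` for a strictly increasing rate of return. -/
def aT (r : ℝ → ℝ) (t : ℝ) : ℝ :=
  if t ≤ r 0 then 0 else sInf {x | x ∈ Icc (0:ℝ) 1 ∧ r x = t}

/-- The threshold `y^t_i` for a strictly decreasing rate of return. -/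
def yT (p r : ℝ → ℝ) (α k t : ℝ) : ℝ :=
  if effRate p r α k 0 t ≤ 0 then 0
  else sInf {x | x ∈ St r t ∧ effRate p r α k x t = 0}

/-- `ĝ_i(x,t)`, for a strictly decreasing rate of return. -/
def gHat (p r : ℝ → ℝ) (α k x t : ℝ) : ℝ :=
  if x < yT p r α k t then gFun p r α k x t else 0

/-- The function `q_i(x,t)` for strictly increasing rate of return. -/
def qFun (p r : ℝ → ℝ) (α x t : ℝ) : ℝ :=
  deriv r x * (1 - p x) ^ 2 /
      ((r x + 1) * deriv p x - α * deriv r x * (1 - p x) * p x) *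
    ((1 + t) / (r x - t)) ^ (1 - α)

/-- `b` is a best response of a player (parameters `α`, `k`) to the others' total
investment `xbar` at tax rate `t`. -/
def IsBestResponse (p r : ℝ → ℝ) (α k t xbar b : ℝ) : Prop :=
  b ∈ Icc (0:ℝ) 1 ∧
    ∀ y ∈ Icc (0:ℝ) 1,
      y ^ α * effRate p r α k (y + xbar) t ≤ b ^ α * effRate p r α k (b + xbar) t

/-- Pure Nash equilibrium of the Fragile CPR game at tax rate `t`. -/
def IsPNE {ι : Type*} [Fintype ι] [DecidableEq ι] (p r : ℝ → ℝ) (α k : ι → ℝ)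
    (t : ℝ) (x : ι → ℝ) : Prop :=
  (∀ i, x i ∈ Icc (0:ℝ) 1) ∧
    ∀ i, ∀ y ∈ Icc (0:ℝ) 1,
      y ^ α i * effRate p r (α i) (k i) (y + ∑ j ∈ Finset.univ.erase i, x j) t ≤
        x i ^ α i * effRate p r (α i) (k i) (x i + ∑ j ∈ Finset.univ.erase i, x j) t

/-- `y` is the threshold `y^t_i` of a player, as defined in the paper for the
increasing and decreasing cases of the rate of return. -/
def IsThresholdY (p r : ℝ → ℝ) (α k t y : ℝ) : Prop :=
  (StrictMonoOn r (Icc (0:ℝ) 1) →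
    ((∀ x ∈ St r t, effRate p r α k x t ≤ 0) → y = 0) ∧
    ((∃ x ∈ St r t, 0 < effRate p r α k x t) →
      ∃ z ∈ St r t, IsMaxOn (fun x => effRate p r α k x t) (St r t) z ∧
        y ∈ Ioo z 1 ∧ effRate p r α k y t = 0)) ∧
  (StrictAntiOn r (Icc (0:ℝ) 1) →
    ((effRate p r α k 0 t ≤ 0) → y = 0) ∧
    ((0 < effRate p r α k 0 t) → y ∈ St r t ∧ effRate p r α k y t = 0))

/-- Pure Nash equilibrium under player-specific tax sensitivities `γ_i`
(all players have `α = 1` and common loss aversion `k`). -/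
def IsPNEgamma {ι : Type*} [Fintype ι] [DecidableEq ι] (p r : ℝ → ℝ) (k t : ℝ)
    (γ : ι → ℝ) (x : ι → ℝ) : Prop :=
  (∀ i, x i ∈ Icc (0:ℝ) 1) ∧
    ∀ i, ∀ y ∈ Icc (0:ℝ) 1,
      y * effRate p r 1 k (y + ∑ j ∈ Finset.univ.erase i, x j) (γ i * t) ≤
        x i * effRate p r 1 k (x i + ∑ j ∈ Finset.univ.erase i, x j) (γ i * t)

/-! ### The algebraic core -/

/-- Effective rate of return divided by `(1+t)^α`, in terms of the ratio `w = (r-t)/(1+t)` and of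
the failure probability `P`. -/
def normRate (α k P w : ℝ) : ℝ := w ^ α * (1 - P) - k * P

/-- `x`-derivative of the effective rate of return divided by `(1+t)^α`, in terms of
`w = (r-t)/(1+t)`, `ρ = deriv r / (r+1)`, `P = p` and `d = deriv p`. -/
def normDeriv (α k ρ P d w : ℝ) : ℝ :=
  α * (w ^ (α - 1) + w ^ α) * ρ * (1 - P) - (w ^ α + k) * d

/-- The bound `k > q` at `w1` forces the ratio `normDeriv / normRate` to be smaller at `w1` than at
any larger `w2`. The cross product splits into three nonnegative terms, one of which is the
concavity of `w ↦ w ^ α`. -/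
lemma cross_pos {α k ρ P d w1 w2 : ℝ} (hα : 0 < α) (hα1 : α ≤ 1) (hk : 0 < k) (hρ : 0 ≤ ρ)
    (hP : 0 < P) (hP1 : P < 1) (hw1 : 0 < w1) (hw : w1 < w2)
    (hK : w1 ^ (α - 1) * ρ * (1 - P) ^ 2 < k * (d - α * ρ * (1 - P) * P)) :
    0 < normRate α k P w1 * normDeriv α k ρ P d w2
      - normRate α k P w2 * normDeriv α k ρ P d w1 := by
  have hw2 : 0 < w2 := hw1.trans hw
  have ha1 : w1 ^ α = w1 * w1 ^ (α - 1) := by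
    rw [Real.rpow_sub_one hw1.ne']; field_simp
  have ha2 : w2 ^ α = w2 * w2 ^ (α - 1) := by
    rw [Real.rpow_sub_one hw2.ne']; field_simp
  have hlt : w1 ^ α < w2 ^ α := Real.rpow_lt_rpow hw1.le hw hα
  have hb : w2 ^ (α - 1) ≤ w1 ^ (α - 1) :=
    Real.rpow_le_rpow_of_nonpos hw1 hw.le (by linarith)
  have hb1 : 0 < w1 ^ (α - 1) := Real.rpow_pos_of_pos hw1 _
  have hconc : α * w2 ^ (α - 1) * (w2 - w1) ≤ w2 ^ α - w1 ^ α := by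
    have h := (Real.concaveOn_rpow hα.le hα1).le_slope_of_hasDerivAt (x := w1) (y := w2)
      hw1.le hw2.le hw (Real.hasDerivAt_rpow_const (Or.inl hw2.ne'))
    rw [slope_def_field, le_div_iff₀ (by linarith)] at h
    exact h
  unfold normRate normDeriv
  rw [ha1, ha2] at *
  generalize w1 ^ (α - 1) = b1 at *
  generalize w2 ^ (α - 1) = b2 at *
  have hs : 0 < 1 - P := by linarith
  have e1 : 0 < (k * (d - α * ρ * (1 - P) * P) - b1 * ρ * (1 - P) ^ 2) * (w2 * b2 - w1 * b1) :=
    mul_pos (by linarith) (by linarith)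
  have e2 : 0 ≤ b1 * ρ * (1 - P) ^ 2 * (w2 * b2 - w1 * b1 - α * b2 * (w2 - w1)) :=
    mul_nonneg (by positivity) (by linarith)
  have e3 : 0 ≤ k * P * α * ρ * (1 - P) * (b1 - b2) :=
    mul_nonneg (by positivity) (by linarith)
  linear_combination e1 + e2 + e3

/-- The formula for the effective rate of return on the region `t ≤ r x`. -/
def gainRate (p r : ℝ → ℝ) (α k x t : ℝ) : ℝ :=
  (r x - t) ^ α * (1 - p x) - k * (1 + t) ^ α * p x

/-- The `x`-derivative of `gainRate` on the region `t < r x`. -/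
def gainRateDx (p r : ℝ → ℝ) (α k x t : ℝ) : ℝ :=
  α * (r x - t) ^ (α - 1) * deriv r x * (1 - p x) - (r x - t) ^ α * deriv p x
    - k * (1 + t) ^ α * deriv p x

lemma effRate_eq_gainRate {p r : ℝ → ℝ} {α k x t : ℝ} (h : t ≤ r x) :
    effRate p r α k x t = gainRate p r α k x t := by
  rw [effRate, if_pos (by linarith), gainRate]

lemma gainRate_eq_norm {p r : ℝ → ℝ} {α k x t : ℝ} (ht : 0 ≤ t) (h : t < r x) :
    gainRate p r α k x t = (1 + t) ^ α * normRate α k (p x) ((r x - t) / (1 + t)) := by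
  have hv : 0 < 1 + t := by linarith
  unfold gainRate normRate
  rw [Real.div_rpow (by linarith) hv.le]
  have := (Real.rpow_pos_of_pos hv α).ne'
  field_simp

lemma gainRateDx_eq_norm {p r : ℝ → ℝ} {α k x t : ℝ} (ht : 0 ≤ t) (h : t < r x) :
    gainRateDx p r α k x t = (1 + t) ^ α *
      normDeriv α k (deriv r x / (r x + 1)) (p x) (deriv p x) ((r x - t) / (1 + t)) := by
  have hv : 0 < 1 + t := by linarith
  have hu : 0 < r x - t := by linarith
  have hR : r x + 1 ≠ 0 := by linarith
  unfold gainRateDx normDeriv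
  rw [Real.div_rpow hu.le hv.le, Real.div_rpow hu.le hv.le, Real.rpow_sub_one hv.ne',
    Real.rpow_sub_one hu.ne']
  have := (Real.rpow_pos_of_pos hv α).ne'
  have := hu.ne'
  field_simp
  ring

/-- Raising the tax from `t2` to `t ≤ t1` at an equilibrium utilization `x` of the tax `t2` lowers
`gainRateDx / gainRate`. Here `c > 0` is the investment of an active player at `t2`, so that
`hfoc` is her first order condition; together with nonnegativity of her rate of return it makes the
denominator of `qFun` positive, which is what gives content to the hypothesis `hq`. -/
lemma tax_cross {p r : ℝ → ℝ} {α k x t t1 t2 c : ℝ} (hα : 0 < α) (hα1 : α ≤ 1) (hk : 0 < k)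
    (hr' : 0 ≤ deriv r x) (hp' : 0 < deriv p x) (hP : 0 < p x) (hP1 : p x < 1)
    (ht2 : 0 ≤ t2) (h2 : t2 < t) (ht1 : t ≤ t1) (hrt : t1 < r x) (hc : 0 < c)
    (hf : 0 ≤ gainRate p r α k x t2)
    (hfoc : α * gainRate p r α k x t2 + c * gainRateDx p r α k x t2 = 0)
    (hq : qFun p r α x t1 < k) :
    0 < gainRate p r α k x t2 ∧ gainRateDx p r α k x t2 < 0 ∧
      0 < gainRate p r α k x t * gainRateDx p r α k x t2
        - gainRate p r α k x t2 * gainRateDx p r α k x t := by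
  have hR : 0 < r x + 1 := by linarith
  have hρ : 0 ≤ deriv r x / (r x + 1) := by positivity
  have hv1 : 0 < 1 + t1 := by linarith
  have hv : 0 < 1 + t := by linarith
  have hv2 : 0 < 1 + t2 := by linarith
  have hV := Real.rpow_pos_of_pos hv α
  have hV2 := Real.rpow_pos_of_pos hv2 α
  have hu1 : 0 < r x - t1 := by linarith
  have hw1 : 0 < (r x - t1) / (1 + t1) := by positivity
  have hw1t : (r x - t1) / (1 + t1) ≤ (r x - t) / (1 + t) := by
    rw [div_le_div_iff₀ hv1 hv]; nlinarith
  have hwt2 : (r x - t) / (1 + t) < (r x - t2) / (1 + t2) := by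
    rw [div_lt_div_iff₀ hv hv2]; nlinarith
  rw [gainRate_eq_norm (by linarith) (by linarith)] at *
  rw [gainRateDx_eq_norm (by linarith) (by linarith)] at *
  rw [gainRate_eq_norm (t := t) (by linarith) (by linarith),
    gainRateDx_eq_norm (t := t) (by linarith) (by linarith)]
  have hqK : ((r x - t1) / (1 + t1)) ^ (α - 1) = ((1 + t1) / (r x - t1)) ^ (1 - α) := by
    rw [← inv_div (1 + t1), Real.inv_rpow (by positivity), ← Real.rpow_neg (by positivity)]
    congr 1; ring
  unfold qFun at hq
  rw [← hqK] at hq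
  generalize hρd : deriv r x / (r x + 1) = ρ at *
  have hr'eq : deriv r x = ρ * (r x + 1) := by rw [← hρd]; field_simp
  rw [hr'eq] at hq
  generalize (r x - t1) / (1 + t1) = w1 at *
  generalize (r x - t) / (1 + t) = w at *
  generalize (r x - t2) / (1 + t2) = w2 at *
  generalize (1 + t) ^ α = V at *
  generalize (1 + t2) ^ α = V2 at *
  generalize p x = P at *
  generalize deriv p x = d at *
  have hw : 0 < w := by linarith
  have hw2 : 0 < w2 := by linarith
  have hs : 0 < 1 - P := by linarith
  have hF : 0 ≤ normRate α k P w2 := nonneg_of_mul_nonneg_right hf hV2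
  have hfoc' : α * normRate α k P w2 + c * normDeriv α k ρ P d w2 = 0 := by
    have : V2 * (α * normRate α k P w2 + c * normDeriv α k ρ P d w2) = 0 := by
      linear_combination hfoc
    exact (mul_eq_zero.1 this).resolve_left hV2.ne'
  have hG : normDeriv α k ρ P d w2 ≤ 0 := by
    have h1 : 0 ≤ α * normRate α k P w2 := by positivity
    by_contra hcon
    push Not at hcon
    have := mul_pos hc hcon
    linarith
  -- Eliminating `k` between `0 ≤ F` and `G ≤ 0` bounds `α ρ (1 - P) P` by `w2 / (1 + w2) * d`.
  have hD : α * ρ * (1 - P) * P < d := by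
    have ha : 0 < w2 ^ α := Real.rpow_pos_of_pos hw2 _
    have hb : 0 < w2 ^ (α - 1) := Real.rpow_pos_of_pos hw2 _
    unfold normRate at hF
    unfold normDeriv at hG
    generalize w2 ^ α = a at *
    generalize w2 ^ (α - 1) = b at *
    have e1 := mul_nonneg hF hp'.le
    have e2 := mul_nonneg hP.le (neg_nonneg.2 hG)
    have e3 := mul_pos hb hp'
    by_contra hcon
    push Not at hcon
    have e4 := mul_le_mul_of_nonneg_left hcon (add_pos ha hb).le
    nlinarith
  have hK1 : w1 ^ (α - 1) * ρ * (1 - P) ^ 2 < k * (d - α * ρ * (1 - P) * P) := by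
    have hden : 0 < d - α * ρ * (1 - P) * P := by linarith
    have heq : ρ * (r x + 1) * (1 - P) ^ 2 /
        ((r x + 1) * d - α * (ρ * (r x + 1)) * (1 - P) * P) * w1 ^ (α - 1)
        = w1 ^ (α - 1) * ρ * (1 - P) ^ 2 / (d - α * ρ * (1 - P) * P) := by
      rw [show (r x + 1) * d - α * (ρ * (r x + 1)) * (1 - P) * P
        = (r x + 1) * (d - α * ρ * (1 - P) * P) by ring]
      field_simp
    rw [heq, div_lt_iff₀ hden] at hq
    exact hq
  have hK : w ^ (α - 1) * ρ * (1 - P) ^ 2 < k * (d - α * ρ * (1 - P) * P) := by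
    have h := Real.rpow_le_rpow_of_nonpos hw1 hw1t (z := α - 1) (by linarith)
    have h' : w ^ (α - 1) * (ρ * (1 - P) ^ 2) ≤ w1 ^ (α - 1) * (ρ * (1 - P) ^ 2) :=
      mul_le_mul_of_nonneg_right h (by positivity)
    linarith
  have hcross := cross_pos hα hα1 hk hρ hP hP1 hw hwt2 hK
  have hFpos : 0 < normRate α k P w2 := by
    rcases hF.lt_or_eq with h | h
    · exact h
    · rw [← h] at hfoc' hcross
      have : normDeriv α k ρ P d w2 = 0 := by
        have : c * normDeriv α k ρ P d w2 = 0 := by linarith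
        exact (mul_eq_zero.1 this).resolve_left hc.ne'
      rw [this] at hcross
      linarith
  refine ⟨by positivity, ?_, ?_⟩
  · have h1 : 0 < α * normRate α k P w2 := by positivity
    have : normDeriv α k ρ P d w2 < 0 := by
      by_contra hcon
      push Not at hcon
      have := mul_nonneg hc.le hcon
      linarith
    exact mul_neg_of_pos_of_neg hV2 this
  · have := mul_pos (mul_pos hV hV2) hcross
    linear_combination this

/-! ### Calculus of the effective rate of return -/

lemma FailureProb.lt_one {p : ℝ → ℝ} (hp : FailureProb p) {x : ℝ} (hx : x ∈ Ico (0 : ℝ) 1) :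
    p x < 1 := by
  have h : p x < p ((x + 1) / 2) := hp.strictMonoOn hx
    ⟨by linarith [hx.1], by linarith [hx.2]⟩ (by linarith [hx.2])
  exact h.trans_le (hp.mem_unit _).2

lemma FailureProb.pos {p : ℝ → ℝ} (hp : FailureProb p) {x : ℝ} (hx : x ∈ Ioo (0 : ℝ) 1) :
    0 < p x :=
  (hp.mem_unit 0).1.trans_lt
    (hp.strictMonoOn ⟨le_rfl, one_pos⟩ ⟨hx.1.le, hx.2⟩ hx.1)

lemma FailureProb.hasDerivAt {p : ℝ → ℝ} (hp : FailureProb p) {x : ℝ} (hx : x ∈ Ioo (0 : ℝ) 1) :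
    HasDerivAt p (deriv p x) x :=
  (((hp.contDiffOn.differentiableOn one_ne_zero) x ⟨hx.1.le, hx.2⟩).differentiableAt
    (Ico_mem_nhds hx.1 hx.2)).hasDerivAt

lemma RateOfReturn.hasDerivAt {r : ℝ → ℝ} (hr : RateOfReturn r) {x : ℝ}
    (hx : x ∈ Ioo (0 : ℝ) 1) : HasDerivAt r (deriv r x) x :=
  (((hr.contDiffOn.differentiableOn one_ne_zero) x ⟨hx.1.le, hx.2.le⟩).differentiableAt
    (Icc_mem_nhds hx.1 hx.2)).hasDerivAt

lemma FailureProb.deriv_pos {p : ℝ → ℝ} (hp : FailureProb p) {x : ℝ} (hx : x ∈ Ioo (0 : ℝ) 1) :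
    0 < deriv p x := by
  have h0 : (0 : ℝ) ∈ Ico (0 : ℝ) 1 := ⟨le_rfl, one_pos⟩
  have hx' : x ∈ Ico (0 : ℝ) 1 := ⟨hx.1.le, hx.2⟩
  have h := hp.convexOn.slope_le_of_hasDerivAt h0 hx' hx.1 (hp.hasDerivAt hx)
  refine lt_of_lt_of_le ?_ h
  rw [slope_def_field]
  exact div_pos (by linarith [hp.strictMonoOn h0 hx' hx.1]) (by linarith [hx.1])

lemma RateOfReturn.deriv_nonneg {r : ℝ → ℝ} (hr : RateOfReturn r)
    (hinc : StrictMonoOn r (Icc (0 : ℝ) 1)) {x : ℝ} (hx : x ∈ Ioo (0 : ℝ) 1) :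
    0 ≤ deriv r x := by
  have h1 : (1 : ℝ) ∈ Icc (0 : ℝ) 1 := ⟨zero_le_one, le_rfl⟩
  have hx' : x ∈ Icc (0 : ℝ) 1 := ⟨hx.1.le, hx.2.le⟩
  have h := hr.concaveOn.slope_le_of_hasDerivAt hx' h1 hx.2 (hr.hasDerivAt hx)
  refine le_trans ?_ h
  rw [slope_def_field]
  exact div_nonneg (by linarith [hinc hx' h1 hx.2]) (by linarith [hx.2])

lemma hasDerivAt_gainRate {p r : ℝ → ℝ} (hp : FailureProb p) (hr : RateOfReturn r)
    {α k x t : ℝ} (hx : x ∈ Ioo (0 : ℝ) 1) (h : t < r x) :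
    HasDerivAt (fun z => gainRate p r α k z t) (gainRateDx p r α k x t) x := by
  have h1 := ((hr.hasDerivAt hx).sub_const t).rpow_const (p := α)
    (Or.inl (by linarith : r x - t ≠ 0))
  have h2 := (hp.hasDerivAt hx).const_sub 1
  have h3 := (hp.hasDerivAt hx).const_mul (k * (1 + t) ^ α)
  refine ((h1.mul h2).sub h3).congr_deriv ?_
  unfold gainRateDx
  ring

lemma hasDerivAt_effRate {p r : ℝ → ℝ} (hp : FailureProb p) (hr : RateOfReturn r)
    {α k x t : ℝ} (hx : x ∈ Ioo (0 : ℝ) 1) (h : t < r x) :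
    HasDerivAt (fun z => effRate p r α k z t) (gainRateDx p r α k x t) x := by
  refine (hasDerivAt_gainRate hp hr hx h).congr_of_eventuallyEq ?_
  filter_upwards [(hr.hasDerivAt hx).continuousAt.eventually (lt_mem_nhds h)] with z hz
  exact effRate_eq_gainRate hz.le

lemma concaveOn_gainRate {p r : ℝ → ℝ} (hp : FailureProb p) (hr : RateOfReturn r)
    (hinc : StrictMonoOn r (Icc (0 : ℝ) 1)) {α k t a b : ℝ} (hα : 0 < α) (hα1 : α ≤ 1)
    (hk : 0 < k) (ht : 0 ≤ t) (ha : 0 ≤ a) (hb : b < 1) (hra : t ≤ r a) :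
    ConcaveOn ℝ (Icc a b) (fun x => gainRate p r α k x t) := by
  have hsub : Icc a b ⊆ Ico (0 : ℝ) 1 := fun x hx => ⟨ha.trans hx.1, hx.2.trans_lt hb⟩
  have hsub' : Icc a b ⊆ Icc (0 : ℝ) 1 := hsub.trans Ico_subset_Icc_self
  have hcv : Convex ℝ (Icc a b) := convex_Icc a b
  have hrt : ∀ x ∈ Icc a b, 0 ≤ r x - t := fun x hx => by
    have := hinc.monotoneOn (hsub' ⟨le_rfl, hx.1.trans hx.2⟩) (hsub' hx) hx.1
    linarith
  have hmono : MonotoneOn (fun x : ℝ => x ^ α) (Ici 0) := fun x hx y _ hxy =>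
    Real.rpow_le_rpow hx hxy hα.le
  have hrc : ConcaveOn ℝ (Icc a b) (fun x => r x - t) := by
    have := (hr.concaveOn.subset hsub' hcv).add (concaveOn_const (-t) hcv)
    exact this
  have hpow : ConcaveOn ℝ (Icc a b) (fun x => (r x - t) ^ α) := by
    refine ⟨hcv, fun x hx y hy u v hu hv huv => ?_⟩
    have e1 := (Real.concaveOn_rpow hα.le hα1).2 (hrt x hx) (hrt y hy) hu hv huv
    refine e1.trans (hmono ?_ ?_ (hrc.2 hx hy hu hv huv))
    · have := hrt x hx
      have := hrt y hy
      simp only [smul_eq_mul, mem_Ici]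
      positivity
    · exact hrt _ (hcv hx hy hu hv huv)
  have hpc : ConvexOn ℝ (Icc a b) p := hp.convexOn.subset hsub hcv
  have hs : ConcaveOn ℝ (Icc a b) (fun x => 1 - p x) :=
    (concaveOn_const 1 hcv).sub hpc
  have hmul := hpow.mul hs (fun x hx => Real.rpow_nonneg (hrt x hx) _)
    (fun x hx => by have := (hp.mem_unit x).2; linarith) (by
      intro x hx y hy hxy
      have h1 : p y < p x := by linarith
      have h2 : y < x := by
        by_contra hcon
        push Not at hcon
        have := hp.strictMonoOn.monotoneOn (hsub hx) (hsub hy) hcon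
        linarith
      have h3 := hinc.monotoneOn (hsub' hy) (hsub' hx) h2.le
      exact Real.rpow_le_rpow (hrt y hy) (by linarith) hα.le)
  have hc : 0 ≤ k * (1 + t) ^ α := by positivity
  exact hmul.sub (hpc.smul hc)

lemma gainRate_tax_anti {p r : ℝ → ℝ} (hp : FailureProb p) {α k x t t' : ℝ} (hα : 0 < α)
    (hk : 0 < k) (ht : 0 ≤ t) (htt : t < t') (hx : x ∈ Ico (0 : ℝ) 1) (hr : t' ≤ r x) :
    gainRate p r α k x t' < gainRate p r α k x t := by
  have h1 : (r x - t') ^ α < (r x - t) ^ α :=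
    Real.rpow_lt_rpow (by linarith) (by linarith) hα
  have h2 : (1 + t) ^ α ≤ (1 + t') ^ α := Real.rpow_le_rpow (by linarith) (by linarith) hα.le
  have h3 := mul_lt_mul_of_pos_right h1 (sub_pos.2 (hp.lt_one hx))
  have h4 := mul_le_mul_of_nonneg_right (mul_le_mul_of_nonneg_left h2 hk.le) (hp.mem_unit x).1
  unfold gainRate
  linarith

/-! ### Equilibrium conditions -/

section PNE

variable {ι : Type*} [Fintype ι] [DecidableEq ι] {p r : ℝ → ℝ} {α k : ι → ℝ} {t : ℝ} {x : ι → ℝ}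

/-- An active player has a nonnegative effective rate of return: otherwise investing zero is
better. -/
lemma IsPNE.effRate_nonneg (hx : IsPNE p r α k t x) (hα : ∀ i, 0 < α i) {i : ι} (hi : 0 < x i) :
    0 ≤ effRate p r (α i) (k i) (∑ j, x j) t := by
  have h := hx.2 i 0 ⟨le_rfl, zero_le_one⟩
  rw [Real.zero_rpow (hα i).ne', zero_mul, Finset.add_sum_erase _ _ (Finset.mem_univ i)] at h
  exact nonneg_of_mul_nonneg_right h (Real.rpow_pos_of_pos hi _)

lemma IsPNE.total_lt_one (hp : FailureProb p) (hx : IsPNE p r α k t x) (hα : ∀ i, 0 < α i)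
    (hk : ∀ i, 0 < k i) (ht : 0 ≤ t) : ∑ j, x j < 1 := by
  by_contra hcon
  push Not at hcon
  obtain ⟨i, -, hi⟩ : ∃ i ∈ Finset.univ, 0 < x i :=
    Finset.exists_lt_of_sum_lt (by simpa using one_pos.trans_le hcon)
  have h := hx.effRate_nonneg hα hi
  have hpos : 0 < k i * (1 + t) ^ α i :=
    mul_pos (hk i) (Real.rpow_pos_of_pos (by linarith) _)
  unfold effRate at h
  rw [hp.eq_one _ hcon] at h
  split_ifs at h <;> linarith

lemma IsPNE.le_total (hx : IsPNE p r α k t x) (i : ι) : x i ≤ ∑ j, x j :=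
  Finset.single_le_sum (fun j _ => (hx.1 j).1) (Finset.mem_univ i)

/-- First order condition of an active player. -/
lemma IsPNE.foc (hp : FailureProb p) (hr : RateOfReturn r) (hx : IsPNE p r α k t x)
    (hX : ∑ j, x j ∈ Ioo (0 : ℝ) 1) (hrt : t < r (∑ j, x j)) {i : ι} (hi : 0 < x i) :
    α i * gainRate p r (α i) (k i) (∑ j, x j) t
      + x i * gainRateDx p r (α i) (k i) (∑ j, x j) t = 0 := by
  have hsum : x i + ∑ j ∈ Finset.univ.erase i, x j = ∑ j, x j :=
    Finset.add_sum_erase _ _ (Finset.mem_univ i)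
  have hi1 : x i < 1 := (hx.le_total i).trans_lt hX.2
  have hd := hasDerivAt_effRate (α := α i) (k := k i) hp hr hX hrt
  rw [← hsum] at hd
  have hd1 := (Real.hasDerivAt_rpow_const (x := x i) (p := α i) (Or.inl hi.ne')).mul
    (hd.comp_add_const (x i) _)
  have hmax : IsLocalMax
      ((fun y => y ^ α i) * fun y => effRate p r (α i) (k i)
        (y + ∑ j ∈ Finset.univ.erase i, x j) t) (x i) := by
    filter_upwards [Icc_mem_nhds hi hi1] with y hy
    exact hx.2 i y hy
  have h0 := hmax.hasDerivAt_eq_zero hd1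
  simp only [hsum] at h0
  rw [effRate_eq_gainRate hrt.le, Real.rpow_sub_one hi.ne'] at h0
  have hne : x i ^ α i ≠ 0 := (Real.rpow_pos_of_pos hi _).ne'
  have hne' := hi.ne'
  field_simp at h0
  rw [mul_zero] at h0
  exact (mul_eq_zero.1 h0).resolve_left hne

/-- An inactive player has a nonpositive effective rate of return at every larger utilization. -/
lemma IsPNE.effRate_nonpos (hx : IsPNE p r α k t x) (hα : ∀ i, 0 < α i) {i : ι} (hi : x i = 0)
    {z : ℝ} (hz : ∑ j, x j < z) (hz1 : z ≤ 1) :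
    effRate p r (α i) (k i) z t ≤ 0 := by
  have hsum : x i + ∑ j ∈ Finset.univ.erase i, x j = ∑ j, x j :=
    Finset.add_sum_erase _ _ (Finset.mem_univ i)
  rw [hi, zero_add] at hsum
  have hnn : 0 ≤ ∑ j, x j := Finset.sum_nonneg fun j _ => (hx.1 j).1
  have h := hx.2 i (z - ∑ j, x j) ⟨by linarith, by linarith⟩
  rw [hsum, hi, Real.zero_rpow (hα i).ne', zero_mul, sub_add_cancel] at h
  by_contra hcon
  push Not at hcon
  have := mul_pos (Real.rpow_pos_of_pos (sub_pos.2 hz) (α i)) hcon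
  linarith

end PNE

/-- Beyond `a_t` the rate of return exceeds `t`. The bound `t < t̄` ensures that `r` reaches the
value `t` when `r 0 < t`, so that the infimum defining `aT` is over a nonempty set. -/
lemma lt_rate_of_aT_lt {ι : Type*} [Fintype ι] {p r : ℝ → ℝ} {α k : ι → ℝ}
    (hp : FailureProb p) (hr : RateOfReturn r) (hinc : StrictMonoOn r (Icc (0 : ℝ) 1))
    (hk : ∀ i, 0 < k i) {t X : ℝ} (ht : 0 ≤ t) (h1 : t < tbar p r α k)
    (hX : X ∈ Ioo (0 : ℝ) 1) (ha : aT r t < X) : t < r X := by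
  have h0 : (0 : ℝ) ∈ Icc (0 : ℝ) 1 := ⟨le_rfl, zero_le_one⟩
  have hX' : X ∈ Icc (0 : ℝ) 1 := ⟨hX.1.le, hX.2.le⟩
  unfold aT at ha
  split_ifs at ha with h
  · exact h.trans_lt (hinc h0 hX' hX.1)
  · push Not at h
    have hne : {t : ℝ | 0 ≤ t ∧ ∃ i : ι, ∃ x ∈ Icc (0:ℝ) 1,
        0 < effRate p r (α i) (k i) x t}.Nonempty := by
      by_contra hcon
      rw [Set.not_nonempty_iff_eq_empty] at hcon
      rw [tbar, hcon, Real.sSup_empty] at h1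
      linarith
    obtain ⟨s, ⟨hs0, i, x, hx, hf⟩, hts⟩ := exists_lt_of_lt_csSup hne h1
    have hsx : s ≤ r x := by
      by_contra hcon
      push Not at hcon
      rw [effRate, if_neg (by linarith)] at hf
      have e1 : 0 ≤ (s - r x) ^ α i := Real.rpow_nonneg (by linarith) _
      have e2 : 0 ≤ (1 + s) ^ α i := Real.rpow_nonneg (by linarith) _
      have e3 := hp.mem_unit x
      have := mul_nonneg (hk i).le (add_nonneg (mul_nonneg e1 (sub_nonneg.2 e3.2))
        (mul_nonneg e2 e3.1))
      linarith
    have hcont : ContinuousOn r (Icc 0 x) :=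
      hr.contDiffOn.continuousOn.mono (Icc_subset_Icc_right hx.2)
    obtain ⟨y, hy, hyt⟩ := intermediate_value_Icc hx.1 hcont ⟨h.le, by linarith⟩
    obtain ⟨z, ⟨hz, hzt⟩, hzX⟩ := exists_lt_of_csInf_lt
      (s := {x | x ∈ Icc (0:ℝ) 1 ∧ r x = t}) ⟨y, ⟨hy.1, hy.2.trans hx.2⟩, hyt⟩ ha
    rw [← hzt]
    exact hinc hz hX' hzX

/-! ### Comparison of one player's investments -/

/-- A player active at both equilibria, with investments `c` (tax `t2`, utilization `X2`) and `d`
(tax `t1`, utilization `X1 > X2`), satisfies `d ≤ c`. -/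
lemma active_le {p r : ℝ → ℝ} (hp : FailureProb p) (hr : RateOfReturn r)
    (hinc : StrictMonoOn r (Icc (0 : ℝ) 1)) {α k t1 t2 X1 X2 c d : ℝ}
    (hα : 0 < α) (hα1 : α ≤ 1) (hk : 0 < k) (ht2 : 0 ≤ t2) (h21 : t2 < t1)
    (hX2 : X2 ∈ Ioo (0 : ℝ) 1) (hX1 : X1 ∈ Ioo (0 : ℝ) 1) (hXX : X2 < X1) (hrt : t1 < r X2)
    (hc : 0 < c)
    (hf2 : 0 ≤ gainRate p r α k X2 t2) (hf1 : 0 ≤ gainRate p r α k X1 t1)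
    (hfoc2 : α * gainRate p r α k X2 t2 + c * gainRateDx p r α k X2 t2 = 0)
    (hfoc1 : α * gainRate p r α k X1 t1 + d * gainRateDx p r α k X1 t1 = 0)
    (hq : qFun p r α X2 t1 < k) : d ≤ c := by
  have hrX : r X2 < r X1 :=
    hinc ⟨hX2.1.le, hX2.2.le⟩ ⟨hX1.1.le, hX1.2.le⟩ hXX
  have hcross := fun t (h2 : t2 < t) (h1 : t ≤ t1) =>
    tax_cross (t := t) hα hα1 hk (hr.deriv_nonneg hinc hX2) (hp.deriv_pos hX2) (hp.pos hX2)
      (hp.lt_one ⟨hX2.1.le, hX2.2⟩) ht2 h2 h1 hrt hc hf2 hfoc2 hq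
  obtain ⟨hF2, hG2, hC1⟩ := hcross t1 h21 le_rfl
  have htan : ∀ t, 0 ≤ t → t ≤ t1 → gainRate p r α k X1 t
      ≤ gainRate p r α k X2 t + gainRateDx p r α k X2 t * (X1 - X2) := by
    intro t ht htt
    have h := (concaveOn_gainRate hp hr hinc hα hα1 hk ht hX2.1.le hX1.2
      (htt.trans hrt.le)).slope_le_of_hasDerivAt (left_mem_Icc.2 hXX.le) (right_mem_Icc.2 hXX.le)
      hXX (hasDerivAt_gainRate hp hr hX2 (htt.trans_lt hrt))
    rw [slope_def_field, div_le_iff₀ (by linarith)] at h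
    linarith
  have hanti : gainRateDx p r α k X1 t1 ≤ gainRateDx p r α k X2 t1 := by
    have hcv := concaveOn_gainRate hp hr hinc hα hα1 hk (ht2.trans h21.le) hX2.1.le hX1.2 hrt.le
    exact (hcv.le_slope_of_hasDerivAt (left_mem_Icc.2 hXX.le) (right_mem_Icc.2 hXX.le)
      hXX (hasDerivAt_gainRate hp hr hX1 (hrt.trans hrX))).trans
      (hcv.slope_le_of_hasDerivAt (left_mem_Icc.2 hXX.le) (right_mem_Icc.2 hXX.le)
      hXX (hasDerivAt_gainRate hp hr hX2 hrt))
  rcases lt_or_ge (gainRate p r α k X2 t1) 0 with hneg | hnn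
  · -- The rate at `X2` vanishes at some tax `s` below `t1`; there it is already decreasing in `x`,
    -- so the rate at `X1` is negative at `s`, and all the more at `t1`.
    exfalso
    have hcont : ContinuousOn (fun t => gainRate p r α k X2 t) (Icc t2 t1) := by
      unfold gainRate
      have c1 : Continuous fun t : ℝ => (r X2 - t) ^ α :=
        (continuous_const.sub continuous_id).rpow_const fun _ => Or.inr hα.le
      have c2 : Continuous fun t : ℝ => (1 + t) ^ α :=
        (continuous_const.add continuous_id).rpow_const fun _ => Or.inr hα.le
      exact (by fun_prop : Continuous _).continuousOn
    obtain ⟨s, hs, hs0⟩ := intermediate_value_Icc' h21.le hcont ⟨hneg.le, hF2.le⟩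
    simp only at hs0
    have hs2 : t2 < s := lt_of_le_of_ne hs.1 (by rintro rfl; linarith)
    have hs1 : s < t1 := lt_of_le_of_ne hs.2 (by rintro rfl; linarith)
    obtain ⟨-, -, hC⟩ := hcross s hs2 hs.2
    rw [hs0] at hC
    have hG : gainRateDx p r α k X2 s < 0 := by
      by_contra hcon
      push Not at hcon
      have := mul_nonneg hF2.le hcon
      linarith
    have h1 := htan s (ht2.trans hs.1) hs.2
    have h2 := gainRate_tax_anti hp hα hk (ht2.trans hs.1) hs1 ⟨hX1.1.le, hX1.2⟩
      (hrt.trans hrX).le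
    have h3 := mul_neg_of_neg_of_pos hG (sub_pos.2 hXX)
    linarith
  · have hG1 : gainRateDx p r α k X2 t1 < 0 := by
      by_contra hcon
      push Not at hcon
      have e1 := mul_nonneg hF2.le hcon
      have e2 := mul_nonneg hnn (neg_pos.2 hG2).le
      linarith
    have hle : gainRate p r α k X1 t1 ≤ gainRate p r α k X2 t1 := by
      have h3 := mul_neg_of_neg_of_pos hG1 (sub_pos.2 hXX)
      linarith [htan t1 (ht2.trans h21.le) le_rfl]
    have hH : α * gainRate p r α k X2 t1 + c * gainRateDx p r α k X2 t1 < 0 := by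
      have e : gainRate p r α k X2 t2 *
          (α * gainRate p r α k X2 t1 + c * gainRateDx p r α k X2 t1) < 0 := by
        have := mul_pos hc hC1
        linear_combination this + gainRate p r α k X2 t1 * hfoc2
      by_contra hcon
      push Not at hcon
      have := mul_nonneg hF2.le hcon
      linarith
    by_contra hcd
    push Not at hcd
    have e1 : 0 < (d - c) * (-gainRateDx p r α k X1 t1) :=
      mul_pos (by linarith) (by linarith)
    have e2 := mul_le_mul_of_nonneg_left hle hα.le
    have e3 := mul_le_mul_of_nonneg_left hanti hc.le
    linarith

/-- for a strictly increasing rate of return, if `t_2 < t_1 < t̄`,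
the utilization at the PNE for `t_2` exceeds `a_{t_1}`, and every player's loss
aversion index satisfies `k_i > q_i(x^{t_2}_NE, t_1)`, then the PNE utilizations
satisfy `x^{t_1}_NE ≤ x^{t_2}_NE`. -/
theorem statement9 {ι : Type*} [Fintype ι] [DecidableEq ι] [Nonempty ι]
    (p r : ℝ → ℝ) (α k : ι → ℝ)
    (hp : FailureProb p) (hr : RateOfReturn r)
    (hinc : StrictMonoOn r (Icc (0:ℝ) 1))
    (hα : ∀ i, α i ∈ Ioc (0:ℝ) 1) (hk : ∀ i, 0 < k i)
    (t1 t2 : ℝ) (ht2 : 0 ≤ t2) (h21 : t2 < t1) (h1 : t1 < tbar p r α k)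
    (x1 x2 : ι → ℝ)
    (hx1 : IsPNE p r α k t1 x1) (hx2 : IsPNE p r α k t2 x2)
    (ha : aT r t1 < ∑ i, x2 i)
    (hq : ∀ i, qFun p r (α i) (∑ j, x2 j) t1 < k i) :
    ∑ i, x1 i ≤ ∑ i, x2 i := by
  have hα0 : ∀ i, 0 < α i := fun i => (hα i).1
  have ht1 : 0 ≤ t1 := ht2.trans h21.le
  by_contra hcon
  push Not at hcon
  have h2lt : ∑ i, x2 i < 1 := hx2.total_lt_one hp hα0 hk ht2
  have h1lt : ∑ i, x1 i < 1 := hx1.total_lt_one hp hα0 hk ht1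
  have h2pos : 0 < ∑ i, x2 i := by
    refine lt_of_le_of_lt ?_ ha
    unfold aT
    split_ifs
    · exact le_rfl
    · exact Real.sInf_nonneg fun x hx => hx.1.1
  have hX2 : ∑ i, x2 i ∈ Ioo (0 : ℝ) 1 := ⟨h2pos, h2lt⟩
  have hX1 : ∑ i, x1 i ∈ Ioo (0 : ℝ) 1 := ⟨h2pos.trans hcon, h1lt⟩
  have hrt : t1 < r (∑ i, x2 i) := lt_rate_of_aT_lt hp hr hinc hk ht1 h1 hX2 ha
  have hrt1 : t1 < r (∑ i, x1 i) :=
    hrt.trans (hinc ⟨hX2.1.le, hX2.2.le⟩ ⟨hX1.1.le, hX1.2.le⟩ hcon)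
  refine absurd (Finset.sum_le_sum fun i _ => ?_) (not_le.2 hcon)
  rcases (hx1.1 i).1.eq_or_lt with hi | hi
  · rw [← hi]
    exact (hx2.1 i).1
  have hf1 := hx1.effRate_nonneg hα0 hi
  rw [effRate_eq_gainRate hrt1.le] at hf1
  rcases (hx2.1 i).1.eq_or_lt with hi2 | hi2
  · exfalso
    have h := hx2.effRate_nonpos hα0 hi2.symm hcon h1lt.le
    rw [effRate_eq_gainRate (h21.trans hrt1).le] at h
    have := gainRate_tax_anti hp (hα0 i) (hk i) ht2 h21 ⟨hX1.1.le, hX1.2⟩ hrt1.le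
    linarith
  · have hf2 := hx2.effRate_nonneg hα0 hi2
    rw [effRate_eq_gainRate (h21.trans hrt).le] at hf2
    exact active_le hp hr hinc (hα0 i) (hα i).2 (hk i) ht2 h21 hX2 hX1 hcon hrt hi2 hf2 hf1
      (hx2.foc hp hr hX2 (h21.trans hrt) hi2) (hx1.foc hp hr hX1 hrt1 hi) (hq i)
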